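/- arXiv:2011.10967 — 2 statements merged into one kernel-verified Lean document; each statement's English description precedes it below -/
import Mathlib

section
/- For every real p with 1 ≤ p < ∞ and every x with 0 ≤ x ≤ 1, the p-th power of the H^p(T^2) norm of z1 + x z2 equals the sum ∑_{j=0}^∞ binom(p/2, j)^2 x^{2j}, where binom(p/2, j) = (p/2)(p/2 - 1)⋯(p/2 - j + 1)/j! is the generalized binomial coefficient. Equivalently, (1/2π) ∫_0^{2π} (1 + 2x cos θ + x^2)^{p/2} dθ = ∑_{j=0}^∞ binom(p/2, j)^2 x^{2j}. -/
open scoped Real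

/-- The generalized binomial coefficient `r(r-1)⋯(r-j+1)/j!`. -/
noncomputable def gbinom (r : ℝ) (j : ℕ) : ℝ :=
  (∏ k ∈ Finset.range j, (r - k)) / (Nat.factorial j)

lemma gbinom_eq_choose (r : ℝ) (j : ℕ) : gbinom r j = Ring.choose r j := by
  rw [Ring.choose_eq_smul, gbinom, ← descPochhammer_eval_eq_prod_range, smul_eq_mul,
    div_eq_inv_mul, Polynomial.eval_eq_smeval, ← descPochhammer_map (Int.castRingHom ℝ),
    ← Polynomial.eval_eq_smeval, Polynomial.eval_map, ← Polynomial.eval₂_smulOneHom_eq_smeval]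
  congr 2
  exact Subsingleton.elim _ _

lemma hasSum_binom (a : ℝ) (z : ℂ) (hz : ‖z‖ < 1) :
    HasSum (fun j => (gbinom a j : ℂ) * z ^ j) ((1 + z) ^ (a : ℂ)) := by
  have h := (Complex.one_add_cpow_hasFPowerSeriesOnBall_zero (a := (a : ℂ))).hasSum (y := z)
    (by simpa [Metric.mem_eball, edist_zero_right, enorm_eq_nnnorm, ← NNReal.coe_lt_coe] using hz)
  simp only [binomialSeries_apply, List.ofFn_const, List.prod_replicate, smul_eq_mul, zero_add] at h
  simpa only [gbinom_eq_choose, Complex.ofReal_choose] using h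

lemma integral_exp_diag (j k : ℕ) :
    ∫ θ in (0:ℝ)..(2 * π), Complex.exp (((j : ℂ) - k) * Complex.I * θ)
      = if j = k then (2 * π : ℂ) else 0 := by
  split_ifs with h
  · subst h; simp
  · have hne : ((j : ℂ) - k) * Complex.I ≠ 0 :=
      mul_ne_zero (sub_ne_zero.2 (by exact_mod_cast h)) Complex.I_ne_zero
    rw [integral_exp_mul_complex hne]
    have : Complex.exp (((j : ℂ) - k) * Complex.I * ((2 * π : ℝ) : ℂ)) = 1 := by
      rw [Complex.exp_eq_one_iff]
      exact ⟨(j : ℤ) - k, by push_cast; ring⟩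
    rw [this]; simp

lemma hasSum_mul_aux (u v : ℕ → ℂ) (s t : ℂ) (hu : HasSum u s) (hv : HasSum v t)
    (h : Summable fun q : ℕ × ℕ => u q.1 * v q.2) :
    HasSum (fun q : ℕ × ℕ => u q.1 * v q.2) (s * t) :=
  HasSum.mul hu hv h

lemma parseval (c : ℕ → ℝ) (x : ℝ) (hx : 0 ≤ x) (hs : Summable fun j => |c j| * x ^ j)
    (f : ℝ → ℂ)
    (hf : ∀ θ : ℝ, HasSum (fun j => (c j : ℂ) * (x * Complex.exp (θ * Complex.I)) ^ j) (f θ)) :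
    HasSum (fun j => c j ^ 2 * x ^ (2 * j))
      ((1 / (2 * π)) * ∫ θ in (0:ℝ)..(2 * π), ‖f θ‖ ^ 2) := by
  have hexp : ∀ (j : ℕ) (θ : ℝ), ‖(c j : ℂ) * (x * Complex.exp (θ * Complex.I)) ^ j‖
      = |c j| * x ^ j := by
    intro j θ
    simp [Complex.norm_exp_ofReal_mul_I, abs_of_nonneg hx]
  have hS : Summable fun q : ℕ × ℕ => (|c q.1| * x ^ q.1) * (|c q.2| * x ^ q.2) :=
    hs.mul_of_nonneg hs (fun _ => by positivity) (fun _ => by positivity)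
  have hF : ∀ (q : ℕ × ℕ) (θ : ℝ),
      (c q.1 : ℂ) * (x * Complex.exp (θ * Complex.I)) ^ q.1 *
        (starRingEnd ℂ) ((c q.2 : ℂ) * (x * Complex.exp (θ * Complex.I)) ^ q.2)
      = ((c q.1 * c q.2 * x ^ (q.1 + q.2) : ℝ) : ℂ) *
        Complex.exp (((q.1 : ℂ) - q.2) * Complex.I * θ) := by
    intro q θ
    have h1 : Complex.exp (((q.1 : ℂ) - q.2) * Complex.I * θ)
        = Complex.exp (θ * Complex.I) ^ q.1 * Complex.exp (-(θ * Complex.I)) ^ q.2 := by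
      rw [← Complex.exp_nat_mul, ← Complex.exp_nat_mul, ← Complex.exp_add]
      congr 1; ring
    rw [h1]
    simp only [map_mul, map_pow, Complex.conj_ofReal, ← Complex.exp_conj, Complex.conj_I]
    push_cast
    rw [mul_neg]
    ring
  have key : HasSum (fun q : ℕ × ℕ => ∫ θ in (0:ℝ)..(2 * π),
      (c q.1 : ℂ) * (x * Complex.exp (θ * Complex.I)) ^ q.1 *
        (starRingEnd ℂ) ((c q.2 : ℂ) * (x * Complex.exp (θ * Complex.I)) ^ q.2))
      (∫ θ in (0:ℝ)..(2 * π), ((‖f θ‖ ^ 2 : ℝ) : ℂ)) := by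
    refine intervalIntegral.hasSum_integral_of_dominated_convergence
      (fun q _ => (|c q.1| * x ^ q.1) * (|c q.2| * x ^ q.2)) ?_ ?_ ?_ ?_ ?_
    · intro q
      refine Continuous.aestronglyMeasurable ?_
      simp only [hF]
      fun_prop
    · intro q
      refine Filter.Eventually.of_forall fun θ _ => ?_
      rw [norm_mul, RCLike.norm_conj, hexp, hexp]
    · exact Filter.Eventually.of_forall fun θ _ => hS
    · exact intervalIntegrable_const
    · refine Filter.Eventually.of_forall fun θ _ => ?_
      have h2 : ((‖f θ‖ ^ 2 : ℝ) : ℂ) = f θ * (starRingEnd ℂ) (f θ) := by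
        rw [Complex.mul_conj, Complex.normSq_eq_norm_sq]
      rw [h2]
      have h5 : HasSum (fun j => (starRingEnd ℂ)
          ((c j : ℂ) * (x * Complex.exp (θ * Complex.I)) ^ j)) ((starRingEnd ℂ) (f θ)) :=
        (hf θ).map (starRingEnd ℂ) Complex.continuous_conj
      have h6 : Summable fun q : ℕ × ℕ => (c q.1 : ℂ) * (x * Complex.exp (θ * Complex.I)) ^ q.1 *
        (starRingEnd ℂ) ((c q.2 : ℂ) * (x * Complex.exp (θ * Complex.I)) ^ q.2) := by
        refine Summable.of_norm (hS.congr fun q => ?_)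
        rw [norm_mul, RCLike.norm_conj, hexp, hexp]
      have h7 := hasSum_mul_aux (fun j => (c j : ℂ) * (x * Complex.exp (θ * Complex.I)) ^ j) (fun j => (starRingEnd ℂ)
          ((c j : ℂ) * (x * Complex.exp (θ * Complex.I)) ^ j)) (f θ) ((starRingEnd ℂ) (f θ)) (hf θ) h5 h6
      beta_reduce
      exact h7
  simp only [hF, intervalIntegral.integral_const_mul, integral_exp_diag] at key
  have hinj : Function.Injective (fun j : ℕ => (j, j)) := fun a b h => (Prod.ext_iff.1 h).1
  rw [← hinj.hasSum_iff] at key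
  · rw [intervalIntegral.integral_ofReal] at key
    have h3 : HasSum (fun j => c j ^ 2 * x ^ (2 * j) * (2 * π))
        (∫ θ in (0:ℝ)..(2 * π), ‖f θ‖ ^ 2) := by
      rw [← Complex.hasSum_ofReal]
      convert key using 2 with j
      simp only [Function.comp, if_true]
      push_cast
      ring
    have h4 := h3.mul_left (1 / (2 * π))
    have h8 : (fun j => c j ^ 2 * x ^ (2 * j))
        = fun j => 1 / (2 * π) * (c j ^ 2 * x ^ (2 * j) * (2 * π)) := by
      funext j
      have := Real.pi_ne_zero
      field_simp
    rw [h8]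
    exact h4
  · rintro ⟨j, k⟩ h
    have : j ≠ k := by
      rintro rfl
      exact h ⟨j, rfl⟩
    simp [this]

lemma main_lt (a x : ℝ) (hx : 0 ≤ x) (hx1 : x < 1) :
    HasSum (fun j => gbinom a j ^ 2 * x ^ (2 * j))
      ((1 / (2 * π)) * ∫ θ in (0:ℝ)..(2 * π), (1 + 2 * x * Real.cos θ + x ^ 2) ^ a) := by
  have hz : ∀ θ : ℝ, ‖(x : ℂ) * Complex.exp (θ * Complex.I)‖ < 1 := by
    intro θ
    simpa [Complex.norm_exp_ofReal_mul_I, abs_of_nonneg hx] using hx1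
  have h := parseval (gbinom a) x hx ?_ _ (fun θ => hasSum_binom a _ (hz θ))
  · convert h using 5 with θ
    rw [Complex.norm_cpow_real, ← Real.rpow_natCast (_ ^ a), ← Real.rpow_mul (norm_nonneg _),
      mul_comm a, Real.rpow_mul (norm_nonneg _), Real.rpow_natCast, ← Complex.normSq_eq_norm_sq,
      Complex.normSq_apply]
    congr 1
    simp [Complex.exp_ofReal_mul_I_re, Complex.exp_ofReal_mul_I_im]
    nlinarith [Real.sin_sq_add_cos_sq θ]
  · have := (hasSum_binom a x (by simpa [abs_of_nonneg hx] using hx1)).summable.norm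
    simpa [abs_of_nonneg hx] using this

theorem stmt1 (p : ℝ) (hp : 1 ≤ p) (x : ℝ) (hx : x ∈ Set.Icc (0:ℝ) 1) :
    (1 / (2 * π)) * (∫ θ in (0:ℝ)..(2 * π), (1 + 2 * x * Real.cos θ + x ^ 2) ^ (p / 2))
      = ∑' j : ℕ, gbinom (p / 2) j ^ 2 * x ^ (2 * j) := by
  set a := p / 2 with ha
  have ha0 : 0 < a := by rw [ha]; linarith
  rcases hx.2.lt_or_eq with h | rfl
  · exact (main_lt a x hx.1 h).tsum_eq.symm
  set I : ℝ → ℝ := fun y => (1 / (2 * π)) *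
    ∫ θ in (0:ℝ)..(2 * π), (1 + 2 * y * Real.cos θ + y ^ 2) ^ a with hI
  have hIc : Continuous I := by
    refine continuous_const.mul ?_
    refine intervalIntegral.continuous_parametric_intervalIntegral_of_continuous' ?_ _ _
    have : Continuous fun q : ℝ × ℝ => (1 + 2 * q.1 * Real.cos q.2 + q.1 ^ 2) ^ a :=
      Continuous.rpow_const (by fun_prop) (fun _ => Or.inr ha0.le)
    exact this
  have hIt : Filter.Tendsto I (nhdsWithin 1 (Set.Iio 1)) (nhds (I 1)) :=
    hIc.continuousAt.tendsto.mono_left nhdsWithin_le_nhds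
  have hev : ∀ᶠ y : ℝ in nhdsWithin 1 (Set.Iio 1), 0 ≤ y ∧ y < 1 := by
    filter_upwards [Ioo_mem_nhdsLT (zero_lt_one' ℝ)] with y hy using ⟨hy.1.le, hy.2⟩
  have hterm : ∀ j : ℕ, Filter.Tendsto (fun y : ℝ => gbinom a j ^ 2 * y ^ (2 * j))
      (nhdsWithin 1 (Set.Iio 1)) (nhds (gbinom a j ^ 2 * 1 ^ (2 * j))) := by
    intro j
    have : Continuous (fun y : ℝ => gbinom a j ^ 2 * y ^ (2 * j)) := by fun_prop
    exact this.continuousAt.tendsto.mono_left nhdsWithin_le_nhds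
  have hsum : Summable fun j : ℕ => gbinom a j ^ 2 * (1:ℝ) ^ (2 * j) := by
    refine summable_of_sum_le (c := I 1) (fun j => by positivity) fun u => ?_
    refine le_of_tendsto_of_tendsto (tendsto_finsetSum u fun j _ => hterm j) hIt ?_
    filter_upwards [hev] with y hy
    exact sum_le_hasSum u (fun j _ => mul_nonneg (sq_nonneg _) (pow_nonneg hy.1 _))
      (main_lt a y hy.1 hy.2)
  have ht := tendsto_tsum_of_dominated_convergence hsum hterm (by
    filter_upwards [hev] with y hy j
    rw [Real.norm_of_nonneg (mul_nonneg (sq_nonneg _) (pow_nonneg hy.1 _))]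
    refine mul_le_mul_of_nonneg_left ?_ (sq_nonneg _)
    rw [one_pow]
    exact pow_le_one₀ hy.1 hy.2.le)
  refine tendsto_nhds_unique hIt (ht.congr' ?_)
  filter_upwards [hev] with y hy
  exact (main_lt a y hy.1 hy.2).tsum_eq
end

section
/- Define P(x) = (1+2x)^{28}(1 + 4x + x^2)^3 and Q(x) = (1+2x)^{32} F(√x (2+x)/(1+2x))^4 where F(y) = 1 + y^2/4 + y^4/64 + y^6/256 + (5/768) y^8. Then for all x in [0,1], P(0)/Q(0) ≤ P(x)/Q(x) ≤ P(1)/Q(1); i.e., 1 ≤ P(x)/Q(x) ≤ P(1)/Q(1). -/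
/-- `F(y) = 1 + y²/4 + y⁴/64 + y⁶/256 + (5/768)y⁸`. -/
noncomputable def F (y : ℝ) : ℝ :=
  1 + y ^ 2 / 4 + y ^ 4 / 64 + y ^ 6 / 256 + (5/768) * y ^ 8

/-- `P(x) = (1+2x)²⁸ (1+4x+x²)³`. -/
noncomputable def Pf (x : ℝ) : ℝ := (1 + 2 * x) ^ 28 * (1 + 4 * x + x ^ 2) ^ 3

/-- `Q(x) = (1+2x)³² F(√x(2+x)/(1+2x))⁴`. -/
noncomputable def Qf (x : ℝ) : ℝ :=
  (1 + 2 * x) ^ 32 * (F (Real.sqrt x * (2 + x) / (1 + 2 * x))) ^ 4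

/-- `768 (1+2x)⁸ F(y)` as a polynomial in x. -/
noncomputable def Gp (x : ℝ) : ℝ := 768*x^0 + 13056*x^1 + 96192*x^2 + 401664*x^3 + 1042016*x^4 + 1721648*x^5 + 1776428*x^6 + 1060820*x^7 + 298868*x^8 + 17315*x^9 + 908*x^10 + 92*x^11 + 5*x^12

/-- derivative of `Gp`. -/
noncomputable def Gd (x : ℝ) : ℝ := 13056*x^0 + 192384*x^1 + 1204992*x^2 + 4168064*x^3 + 8608240*x^4 + 10658568*x^5 + 7425740*x^6 + 2390944*x^7 + 155835*x^8 + 9080*x^9 + 1012*x^10 + 60*x^11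

/-- quotient in the form used for the monotonicity argument. -/
noncomputable def Hq (x : ℝ) : ℝ :=
  ((1 + 2 * x) ^ 28 * (1 + 4 * x + x ^ 2) ^ 3) / (Gp x) ^ 4

lemma Gp_pos (x : ℝ) (hx : 0 ≤ x) : 0 < Gp x := by
  unfold Gp; positivity

lemma Gp_deriv (x : ℝ) : HasDerivAt Gp (Gd x) x := by
  have h : ∀ (c : ℝ) (n : ℕ), HasDerivAt (fun y : ℝ => c * y ^ n) (c * (n * x ^ (n - 1))) x :=
    fun c n => (hasDerivAt_pow n x).const_mul c
  have := ((((((((((((h 768 0).add (h 13056 1)).add (h 96192 2)).add (h 401664 3)).add (h 1042016 4)).add (h 1721648 5)).add (h 1776428 6)).add (h 1060820 7)).add (h 298868 8)).add (h 17315 9)).add (h 908 10)).add (h 92 11)).add (h 5 12)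
  refine HasDerivAt.congr_deriv (this.congr_of_eventuallyEq ?_) ?_
  · filter_upwards with y
    simp only [Gp, Pi.add_apply]
  · unfold Gd
    norm_num
    ring

lemma Q_eq (x : ℝ) (hx : 0 ≤ x) : Qf x = (Gp x) ^ 4 / 768 ^ 4 := by
  have hu : (1 + 2 * x) ≠ 0 := by positivity
  have hs : Real.sqrt x ^ 2 = x := Real.sq_sqrt hx
  have key : (1 + 2 * x) ^ 8 * F (Real.sqrt x * (2 + x) / (1 + 2 * x)) = Gp x / 768 := by
    have e : ∀ n : ℕ, (Real.sqrt x * (2 + x) / (1 + 2 * x)) ^ (2 * n)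
        = (x * (2 + x) ^ 2 / (1 + 2 * x) ^ 2) ^ n := by
      intro n
      rw [pow_mul, div_pow, mul_pow, hs]
    have e1 := e 1
    have e2 := e 2
    have e3 := e 3
    have e4 := e 4
    norm_num only at e1 e2 e3 e4
    unfold F Gp
    rw [e1, e2, e3, e4]
    field_simp
    ring
  have : Qf x = ((1 + 2 * x) ^ 8 * F (Real.sqrt x * (2 + x) / (1 + 2 * x))) ^ 4 := by
    unfold Qf; ring
  rw [this, key, div_pow]

lemma ratio_eq (x : ℝ) (hx : 0 ≤ x) : Pf x / Qf x = 768 ^ 4 * Hq x := by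
  rw [Q_eq x hx]
  unfold Pf Hq
  have := (Gp_pos x hx).ne'
  field_simp

lemma N_nonneg (x : ℝ) (h0 : 0 ≤ x) (h1 : x ≤ 1) :
    0 ≤ 3 * (4 + 2 * x) * (1 + 2 * x) * Gp x + 56 * (1 + 4 * x + x ^ 2) * Gp x
      - 4 * (1 + 4 * x + x ^ 2) * (1 + 2 * x) * Gd x := by
  have e : 3 * (4 + 2 * x) * (1 + 2 * x) * Gp x + 56 * (1 + 4 * x + x ^ 2) * Gp x
      - 4 * (1 + 4 * x + x ^ 2) * (1 + 2 * x) * Gd x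
      = x ^ 2 * (1 - x) * (2304*x^0 + 13696*x^1 + 49216*x^2 + 184224*x^3 + 387264*x^4 + 451896*x^5 + 419124*x^6 + 388512*x^7 + 211710*x^8 + 27930*x^9 + 2870*x^10 + 140*x^11) := by
    unfold Gp Gd
    ring
  rw [e]
  have : 0 ≤ 1 - x := by linarith
  positivity

lemma Hq_deriv (x : ℝ) (hx : 0 ≤ x) : HasDerivAt Hq
    ((1 + 2 * x) ^ 27 * (1 + 4 * x + x ^ 2) ^ 2 / (Gp x) ^ 5 *
      (3 * (4 + 2 * x) * (1 + 2 * x) * Gp x + 56 * (1 + 4 * x + x ^ 2) * Gp x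
      - 4 * (1 + 4 * x + x ^ 2) * (1 + 2 * x) * Gd x)) x := by
  have hG := (Gp_pos x hx).ne'
  have a : HasDerivAt (fun y : ℝ => 1 + 2 * y) 2 x := by
    simpa using ((hasDerivAt_id x).const_mul 2).const_add 1
  have b : HasDerivAt (fun y : ℝ => 1 + 4 * y + y ^ 2) (4 + 2 * x) x := by
    simpa using (((hasDerivAt_id x).const_mul 4).const_add 1).fun_add (hasDerivAt_pow 2 x)
  have := ((a.fun_pow 28).fun_mul (b.fun_pow 3)).fun_div ((Gp_deriv x).fun_pow 4) (pow_ne_zero 4 hG)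
  refine HasDerivAt.congr_deriv this ?_
  generalize Gp x = g at *
  generalize Gd x = g'
  push_cast
  norm_num only
  field_simp
  ring

lemma Hq_mono : MonotoneOn Hq (Set.Icc 0 1) := by
  apply monotoneOn_of_deriv_nonneg (convex_Icc 0 1)
  · intro x hx
    exact (Hq_deriv x hx.1).continuousAt.continuousWithinAt
  · intro x hx
    rw [interior_Icc] at hx
    exact (Hq_deriv x hx.1.le).differentiableAt.differentiableWithinAt
  · intro x hx
    rw [interior_Icc] at hx
    rw [(Hq_deriv x hx.1.le).deriv]
    have h0 : 0 ≤ x := hx.1.le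
    have := Gp_pos x h0
    exact mul_nonneg (by positivity) (N_nonneg x h0 hx.2.le)

theorem stmt11 (x : ℝ) (hx : x ∈ Set.Icc (0:ℝ) 1) :
    (Pf 0 / Qf 0 ≤ Pf x / Qf x ∧ Pf x / Qf x ≤ Pf 1 / Qf 1) ∧
    1 ≤ Pf x / Qf x := by
  have h0 : Pf 0 / Qf 0 ≤ Pf x / Qf x := by
    rw [ratio_eq 0 le_rfl, ratio_eq x hx.1]
    have := Hq_mono (Set.left_mem_Icc.2 zero_le_one) hx hx.1
    gcongr
  have h1 : Pf x / Qf x ≤ Pf 1 / Qf 1 := by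
    rw [ratio_eq 1 zero_le_one, ratio_eq x hx.1]
    have := Hq_mono hx (Set.right_mem_Icc.2 zero_le_one) hx.2
    gcongr
  have h2 : Pf 0 / Qf 0 = 1 := by simp [Pf, Qf, F]
  exact ⟨⟨h0, h1⟩, h2 ▸ h0⟩
end
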